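/- Let n ≥ 3 be an odd integer and let k ≥ 2 be an integer with 5 ∤ (4k^n − 1), and set d = 4(1 − 4k^n)^n. Then d + 100 = 4(25 − (4k^n − 1)^n), so ℚ(√(d + 100)) = ℚ(√(25 − (4k^n − 1)^n)), and n divides the class number of the imaginary quadratic field ℚ(√(d + 100)). -/

import Mathlib

/-- The quadratic field `ℚ(√d)`, realized as the subfield of `ℂ` generated over `ℚ`
by a complex square root of `d`. -/
noncomputable def Qsqrt (d : ℤ) : IntermediateField ℚ ℂ :=
  IntermediateField.adjoin ℚ {((d : ℂ) ^ ((1 : ℂ) / 2))}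

/-- The class number of `ℚ(√d)`: the order of the ideal class group of its ring of
integers. -/
noncomputable def classNumSqrt (d : ℤ) : ℕ :=
  Nat.card (ClassGroup (NumberField.RingOfIntegers (Qsqrt d)))

/-! Put `y = 4kⁿ - 1`, `D = 25 - yⁿ` and `δ² = D`. In the ring of integers of `ℚ(√D)` the factors of
`(5 + δ)(5 - δ) = yⁿ` are coprime, so `(5 + δ) = Jⁿ` for an ideal `J`, and the class of `J` has
order exactly `n` unless `5 + δ` is associated to a `p`-th power for some prime `p ∣ n`. The only
units are `±1`, so in that case `5 + δ = xᵖ`, where `N = |x|²` is the power `y ^ (n / p)`, hence at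
least `p³`, and `t = 2 Re x` divides `2 Re xᵖ = 10`. Thus `|Re x| ≤ 5` is small compared with `|x|`.
For odd `p` the Chebyshev polynomial satisfies `|T_p(c)| ≥ |c|` whenever `|c| ≤ sin (π / (p + 1))`,
so `Re xᵖ = |x|ᵖ T_p(Re x / |x|)` gives `|Re xᵖ| ≥ |Re x| |x| ^ (p - 1) > 5` as soon as `p ≥ 5`.
For `p = 3` the bound on `|x|` is too weak for this, but the finitely many `t` with `|t| ≤ 10` are
excluded in `t³ - 3tN = 10` by `N ≡ 3` modulo `4` and `N ≥ 27`. -/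

section Integers

lemma not_isSquare_of_emod_four_eq_two {a : ℤ} (ha : a % 4 = 2) : ¬ IsSquare a := by
  rintro ⟨r, rfl⟩
  obtain ⟨m, rfl | rfl⟩ := Int.even_or_odd' r <;> ring_nf at ha <;> omega

lemma not_isSquare_sq_sub_four_mul {D t : ℤ} (hD : D % 4 = 2) (ht : t ^ 2 < 4) :
    ¬ IsSquare ((t ^ 2 - 4) * D) := by
  obtain ⟨hlo, hhi⟩ := abs_lt.1 (sq_lt_sq.1 (by linarith : t ^ 2 < 2 ^ 2))
  obtain rfl | ht1 : t = 0 ∨ t ^ 2 = 1 := by interval_cases t <;> simp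
  · rintro ⟨s, hs⟩
    obtain ⟨r, rfl⟩ : (2 : ℤ) ∣ s :=
      Int.prime_two.dvd_of_dvd_pow (n := 2) ⟨-2 * D, by linarith [sq s]⟩
    exact not_isSquare_of_emod_four_eq_two (a := -D) (by omega) ⟨r, by linarith⟩
  · rw [ht1]
    exact not_isSquare_of_emod_four_eq_two (by omega)

lemma emod_four_pow_eq_three {y : ℤ} (hy : y % 4 = 3) {m : ℕ} (hm : Odd m) : y ^ m % 4 = 3 := by
  have h : y ≡ -1 [ZMOD 4] := hy
  have hpow := h.pow m
  rwa [hm.neg_one_pow] at hpow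

lemma cube_lt_four_mul_two_pow {n : ℕ} (hn : n ≠ 4) : n ^ 3 < 4 * 2 ^ n := by
  obtain h5 | h5 := lt_or_ge n 5
  · interval_cases n <;> simp_all
  induction n, h5 using Nat.le_induction with
  | base => norm_num
  | succ m hm ih =>
    calc (m + 1) ^ 3 ≤ 2 * m ^ 3 := by nlinarith [Nat.mul_le_mul_right (m ^ 2) hm]
      _ < 2 * (4 * 2 ^ m) := by gcongr; exact ih (by omega)
      _ = 4 * 2 ^ (m + 1) := by ring

lemma cube_le_four_mul_pow_sub_one {n : ℕ} (hn : n ≠ 4) {k : ℤ} (hk : 2 ≤ k) :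
    (n : ℤ) ^ 3 ≤ 4 * k ^ n - 1 := by
  have hcube : (n : ℤ) ^ 3 < 4 * 2 ^ n := by exact_mod_cast cube_lt_four_mul_two_pow hn
  have hpow : (2 : ℤ) ^ n ≤ k ^ n := by gcongr
  omega

lemma isCoprime_two_mul_five_pow {y : ℤ} (hy2 : Odd y) (hy5 : ¬ (5 : ℤ) ∣ y) (n : ℕ) :
    IsCoprime (2 * 5) (y ^ n) := by
  have h2 : IsCoprime 2 y := (Int.isCoprime_two_right.2 hy2).symm
  have h5 : IsCoprime 5 y :=
    (Int.prime_iff_natAbs_prime.2 (by norm_num)).coprime_iff_not_dvd.2 hy5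
  exact (h2.mul_left h5).pow_right

end Integers

section ClassGroup

variable {R : Type*} [CommRing R] {a b : R}

lemma isCoprime_add_sub (h : IsCoprime (2 * a) ((a + b) * (a - b))) :
    IsCoprime (a + b) (a - b) := by
  obtain ⟨r, s, hrs⟩ := h
  exact ⟨r, r + s * (a + b), by linear_combination hrs⟩

variable [IsDedekindDomain R] {c : R} {n : ℕ}

lemma exists_span_eq_pow_of_mul_eq_pow (hab : IsCoprime a b) (hmul : a * b = c ^ n) :
    ∃ J : Ideal R, Ideal.span {a} = J ^ n := by
  refine exists_eq_pow_of_mul_eq_pow_of_coprime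
    ((Ideal.isCoprime_span_singleton_iff a b).2 hab) (c := Ideal.span {c}) ?_
  rw [Ideal.span_singleton_mul_span_singleton, hmul, Ideal.span_singleton_pow]

lemma dvd_card_classGroup_of_mul_eq_pow (hn : 0 < n) (ha : a ≠ 0) (hab : IsCoprime a b)
    (hmul : a * b = c ^ n)
    (hpow : ∀ p : ℕ, p.Prime → p ∣ n → ∀ x : R, ¬ Associated (x ^ p) a) :
    n ∣ Nat.card (ClassGroup R) := by
  obtain ⟨J, hJ⟩ := exists_span_eq_pow_of_mul_eq_pow hab hmul
  have hJ₀ : J ∈ nonZeroDivisors (Ideal R) := by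
    refine mem_nonZeroDivisors_of_ne_zero ?_
    rintro rfl
    rw [zero_pow hn.ne'] at hJ
    exact ha (Ideal.span_singleton_eq_bot.1 hJ)
  have hprincipal (m : ℕ) : ClassGroup.mk0 ⟨J, hJ₀⟩ ^ m = 1 ↔ (J ^ m).IsPrincipal := by
    rw [← map_pow, ← ClassGroup.mk0_eq_one_iff (pow_mem hJ₀ m)]
    rfl
  suffices horder : orderOf (ClassGroup.mk0 ⟨J, hJ₀⟩) = n from horder ▸ orderOf_dvd_natCard _
  refine orderOf_eq_of_pow_and_pow_div_prime hn ((hprincipal n).2 (hJ ▸ ⟨a, rfl⟩)) ?_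
  intro p hp hpn hone
  obtain ⟨x, hx⟩ := (hprincipal (n / p)).1 hone
  refine hpow p hp hpn x (Ideal.span_singleton_eq_span_singleton.1 ?_)
  rw [hJ, ← Ideal.span_singleton_pow, Ideal.span, ← hx, ← pow_mul, Nat.div_mul_cancel hpn]

end ClassGroup

section Trigonometry

open Real Polynomial

lemma three_div_pi_mul_le_sin {x : ℝ} (hx₀ : 0 ≤ x) (hx : x ≤ π / 6) : 3 / π * x ≤ sin x := by
  have hs : 6 / π * x ≤ 1 := by
    rw [div_mul_eq_mul_div, div_le_one pi_pos]
    linarith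
  have hconc := strictConcaveOn_sin_Icc.concaveOn.2 (x := 0) (y := π / 6)
    ⟨le_rfl, pi_pos.le⟩ ⟨by positivity, by linarith [pi_pos]⟩ (sub_nonneg.2 hs)
    (by positivity : 0 ≤ 6 / π * x) (sub_add_cancel _ _)
  calc 3 / π * x = (1 - 6 / π * x) • sin 0 + (6 / π * x) • sin (π / 6) := by
        rw [sin_zero, sin_pi_div_six, smul_zero, zero_add, smul_eq_mul]
        ring
    _ ≤ sin ((1 - 6 / π * x) • 0 + (6 / π * x) • (π / 6)) := hconc
    _ = sin x := by
        congr 1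
        rw [smul_zero, zero_add, smul_eq_mul]
        field

lemma sin_le_sin_of_le_of_le_pi_sub {x y : ℝ} (hx : 0 ≤ x) (hxy : x ≤ y) (hy : y ≤ π - x) :
    sin x ≤ sin y := by
  rcases le_total y (π / 2) with hy' | hy'
  · exact sin_le_sin_of_le_of_le_pi_div_two (by linarith [pi_pos]) hy' hxy
  · rw [← sin_pi_sub y]
    exact sin_le_sin_of_le_of_le_pi_div_two (by linarith [pi_pos]) (by linarith) (by linarith)

lemma abs_eval_chebyshevT_sin (m : ℕ) (x : ℝ) :
    |(Chebyshev.T ℝ (2 * m + 1)).eval (sin x)| = |sin ((2 * m + 1) * x)| := by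
  rw [← cos_pi_div_two_sub, Chebyshev.T_real_cos, ← cos_pi_div_two_sub]
  push_cast
  rw [show (2 * m + 1) * (π / 2 - x) = π / 2 - (2 * m + 1) * x + m * π by ring,
    cos_add_nat_mul_pi, abs_mul, abs_neg_one_pow, one_mul]

lemma abs_le_abs_eval_chebyshevT {m : ℕ} {x : ℝ} (hx : |x| ≤ sin (π / (2 * m + 2))) :
    |x| ≤ |(Chebyshev.T ℝ (2 * m + 1)).eval x| := by
  set φ := arcsin |x|
  have hsin : sin φ = |x| :=
    sin_arcsin (by linarith [abs_nonneg x]) (hx.trans (sin_le_one _))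
  have hφ₀ : 0 ≤ φ := arcsin_nonneg.2 (abs_nonneg x)
  have hφm : φ ≤ π / (2 * m + 2) := by
    have hle : π / (2 * m + 2) ≤ π / 2 :=
      div_le_div_of_nonneg_left pi_pos.le two_pos (by linarith [m.cast_nonneg (α := ℝ)])
    calc φ ≤ arcsin (sin (π / (2 * m + 2))) := monotone_arcsin hx
      _ = π / (2 * m + 2) :=
        arcsin_sin ((neg_nonpos.2 (by positivity)).trans (by positivity)) hle
  have hsum : (2 * m + 2) * φ ≤ π := (le_div_iff₀' (by positivity)).1 hφm
  have heval : |(Chebyshev.T ℝ (2 * m + 1)).eval x| = |sin ((2 * m + 1) * φ)| := by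
    rw [← abs_eval_chebyshevT_sin, hsin]
    rcases abs_choice x with h | h <;> rw [h]
    rw [Chebyshev.T_eval_neg, abs_mul, Int.cast_negOnePow]
    simp only [abs_zpow, abs_neg, abs_one, one_zpow, one_mul]
  rw [heval]
  calc |x| = sin φ := hsin.symm
    _ ≤ sin ((2 * m + 1) * φ) :=
        sin_le_sin_of_le_of_le_pi_sub hφ₀ (by nlinarith [m.cast_nonneg (α := ℝ)]) (by linarith)
    _ ≤ |sin ((2 * m + 1) * φ)| := le_abs_self _

lemma re_pow_eq_norm_pow_mul_eval_chebyshevT (z : ℂ) (n : ℕ) :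
    (z ^ n).re = ‖z‖ ^ n * (Chebyshev.T ℝ n).eval (z.re / ‖z‖) := by
  rcases eq_or_ne z 0 with rfl | hz
  · rcases eq_or_ne n 0 with rfl | hn <;> simp [*]
  have hpolar : z ^ n = (‖z‖ ^ n : ℝ) * Complex.exp ((n * z.arg : ℝ) * Complex.I) := by
    conv_lhs => rw [← Complex.norm_mul_exp_arg_mul_I z, mul_pow, ← Complex.exp_nat_mul]
    push_cast
    ring_nf
  rw [hpolar, Complex.re_ofReal_mul, Complex.exp_ofReal_mul_I_re, ← Complex.cos_arg hz,
    Chebyshev.T_real_cos, Int.cast_natCast]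

lemma abs_re_mul_norm_pow_le_abs_re_pow {z : ℂ} {m : ℕ}
    (hz : |z.re| ≤ ‖z‖ * sin (π / (2 * m + 2))) :
    |z.re| * ‖z‖ ^ (2 * m) ≤ |(z ^ (2 * m + 1)).re| := by
  rcases eq_or_ne z 0 with rfl | hz₀
  · simp
  have hnorm : 0 < ‖z‖ := norm_pos_iff.2 hz₀
  have hT : |z.re / ‖z‖| ≤ |(Chebyshev.T ℝ (2 * m + 1)).eval (z.re / ‖z‖)| := by
    apply abs_le_abs_eval_chebyshevT
    rw [abs_div, abs_norm, div_le_iff₀' hnorm]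
    exact hz
  calc |z.re| * ‖z‖ ^ (2 * m) = ‖z‖ ^ (2 * m + 1) * |z.re / ‖z‖| := by
        rw [abs_div, abs_norm]
        field
    _ ≤ ‖z‖ ^ (2 * m + 1) * |(Chebyshev.T ℝ (2 * m + 1)).eval (z.re / ‖z‖)| := by gcongr
    _ = |(z ^ (2 * m + 1)).re| := by
        rw [re_pow_eq_norm_pow_mul_eval_chebyshevT, abs_mul, abs_pow, abs_norm]
        push_cast
        rfl

end Trigonometry

section AlgebraicIntegers

open Complex ComplexConjugate

lemma intCast_dvd_of_eq_mul_isIntegral {K : Type*} [Field K] [CharZero K] {s t : ℤ} {z : K}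
    (hz : IsIntegral ℤ z) (h : (s : K) = t * z) : t ∣ s := by
  rcases eq_or_ne t 0 with rfl | ht
  · simp_all
  have ht' : (t : K) ≠ 0 := Int.cast_ne_zero.2 ht
  have hrat : z = ((s / t : ℚ) : K) := by
    push_cast
    rw [h, mul_div_cancel_left₀ z ht']
  obtain ⟨q, rfl⟩ := hz.exists_int_iff_exists_rat.1 ⟨_, hrat⟩
  exact ⟨q, by exact_mod_cast h⟩

lemma isIntegral_conj {x : ℂ} (hx : IsIntegral ℤ x) : IsIntegral ℤ (conj x) :=
  hx.map (conjAe.toAlgHom.restrictScalars ℤ)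

lemma trace_dvd_trace_pow {x : ℂ} (hx : IsIntegral ℤ x) {n : ℕ} (hn : Odd n) {s t : ℤ}
    (ht : 2 * x.re = t) (hs : 2 * (x ^ n).re = s) : t ∣ s := by
  let x₁ : integralClosure ℤ ℂ := ⟨x, hx⟩
  let x₂ : integralClosure ℤ ℂ := ⟨conj x, isIntegral_conj hx⟩
  obtain ⟨z, hz⟩ := hn.add_dvd_pow_add_pow x₁ x₂
  have hz' : x ^ n + conj (x ^ n) = (x + conj x) * z := by
    rw [map_pow]
    exact congrArg Subtype.val hz
  rw [add_conj, add_conj, hs, ht] at hz'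
  push_cast at hz'
  exact intCast_dvd_of_eq_mul_isIntegral z.2 hz'

lemma two_mul_re_cube (x : ℂ) : 2 * (x ^ 3).re = (2 * x.re) ^ 3 - 3 * (2 * x.re) * normSq x := by
  simp only [pow_succ, pow_zero, one_mul, mul_re, mul_im, normSq_apply]
  ring

lemma re_cube_ne_five {x : ℂ} {t N : ℤ} (ht : 2 * x.re = t) (ht10 : |t| ≤ 10)
    (hN : normSq x = N) (hN4 : N % 4 = 3) (hN27 : 27 ≤ N) : (x ^ 3).re ≠ 5 := by
  intro h
  have hcubic : (t : ℝ) ^ 3 - 3 * t * N = 10 := by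
    rw [← ht, ← hN, ← two_mul_re_cube, h]
    norm_num
  have hcubic' : t * (t ^ 2 - 3 * N) = 10 := by
    rify
    linarith
  obtain ⟨hlo, hhi⟩ := abs_le.1 ht10
  interval_cases t <;> omega

lemma abs_re_le_norm_mul_sin {x : ℂ} {m : ℕ} (hm : 2 ≤ m) (hre : |x.re| ≤ 5)
    (hnorm : ((2 * m + 1 : ℕ) : ℝ) ^ 3 ≤ normSq x) :
    |x.re| ≤ ‖x‖ * Real.sin (Real.pi / (2 * m + 2)) := by
  have hm' : (2 : ℝ) ≤ m := by exact_mod_cast hm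
  have hsin : 3 / (2 * m + 2) ≤ Real.sin (Real.pi / (2 * m + 2)) := by
    have hle : Real.pi / (2 * m + 2) ≤ Real.pi / 6 :=
      div_le_div_of_nonneg_left Real.pi_pos.le (by norm_num) (by linarith)
    calc 3 / (2 * m + 2) = 3 / Real.pi * (Real.pi / (2 * m + 2)) := by field
      _ ≤ _ := three_div_pi_mul_le_sin (by positivity) hle
  have hx : 5 * (2 * m + 2) ≤ 3 * ‖x‖ := by
    refine le_of_sq_le_sq ?_ (by positivity)
    rw [mul_pow, mul_pow, ← normSq_eq_norm_sq]
    push_cast at hnorm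
    nlinarith [mul_nonneg (sub_nonneg.2 hm') (sq_nonneg (m : ℝ))]
  calc |x.re| ≤ 5 := hre
    _ ≤ ‖x‖ * (3 / (2 * m + 2)) := by
        rw [mul_div_assoc', le_div_iff₀ (by positivity)]
        linarith
    _ ≤ _ := by gcongr

lemma five_lt_abs_re_pow {x : ℂ} {m : ℕ} (hm : 2 ≤ m) (hre_lo : 1 / 2 ≤ |x.re|)
    (hre_hi : |x.re| ≤ 5) (hnorm : ((2 * m + 1 : ℕ) : ℝ) ^ 3 ≤ normSq x) :
    5 < |(x ^ (2 * m + 1)).re| := by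
  have hnorm_lo : 125 ≤ normSq x := by
    have hcube : 5 ^ 3 ≤ (2 * m + 1) ^ 3 := Nat.pow_le_pow_left (by omega) 3
    exact le_trans (by exact_mod_cast hcube) hnorm
  have hpow : normSq x ≤ normSq x ^ m := le_self_pow₀ (by linarith) (by omega)
  calc 5 < 1 / 2 * normSq x ^ m := by linarith
    _ ≤ |x.re| * normSq x ^ m := by gcongr
    _ = |x.re| * ‖x‖ ^ (2 * m) := by rw [pow_mul, normSq_eq_norm_sq]
    _ ≤ |(x ^ (2 * m + 1)).re| :=
        abs_re_mul_norm_pow_le_abs_re_pow (abs_re_le_norm_mul_sin hm hre_hi hnorm)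

lemma re_pow_ne_five {x : ℂ} (hx : IsIntegral ℤ x) {p : ℕ} (hp : Odd p) (hp3 : 3 ≤ p) {t N : ℤ}
    (ht : 2 * x.re = t) (hN : normSq x = N) (hN4 : N % 4 = 3) (hpN : (p : ℤ) ^ 3 ≤ N) :
    (x ^ p).re ≠ 5 := by
  intro h
  have ht_dvd : t ∣ 10 := trace_dvd_trace_pow hx hp ht (by rw [h]; norm_num)
  have ht_hi : |t| ≤ 10 := Int.le_of_dvd (by norm_num) ((abs_dvd t 10).2 ht_dvd)
  have ht_lo : 1 ≤ |t| := Int.one_le_abs (by rintro rfl; norm_num at ht_dvd)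
  obtain ⟨m, rfl⟩ := hp
  obtain rfl | hm : m = 1 ∨ 2 ≤ m := by omega
  · exact re_cube_ne_five ht ht_hi hN hN4 hpN h
  have ht_abs : 2 * |x.re| = (|t| : ℤ) := by
    rw [Int.cast_abs, ← ht, abs_mul, abs_two]
  have hre_lo : 1 / 2 ≤ |x.re| := by
    have : (1 : ℝ) ≤ (|t| : ℤ) := by exact_mod_cast ht_lo
    linarith
  have hre_hi : |x.re| ≤ 5 := by
    have : ((|t| : ℤ) : ℝ) ≤ 10 := by exact_mod_cast ht_hi
    linarith
  have hgrow := five_lt_abs_re_pow hm hre_lo hre_hi (by rw [hN]; exact_mod_cast hpN)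
  norm_num [h] at hgrow

end AlgebraicIntegers
section QuadraticField

open Complex ComplexConjugate NumberField

lemma adjoin_algebraMap_mul {F E : Type*} [Field F] [Field E] [Algebra F E] {c : F} (hc : c ≠ 0)
    (x : E) :
    IntermediateField.adjoin F {algebraMap F E c * x} = IntermediateField.adjoin F {x} := by
  refine le_antisymm (IntermediateField.adjoin_simple_le_iff.2 ?_)
    (IntermediateField.adjoin_simple_le_iff.2 ?_)
  · exact mul_mem (algebraMap_mem _ c) (IntermediateField.mem_adjoin_simple_self F x)
  · have hx : x = algebraMap F E c⁻¹ * (algebraMap F E c * x) := by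
      rw [← mul_assoc, ← map_mul, inv_mul_cancel₀ hc, map_one, one_mul]
    rw [hx]
    exact mul_mem (algebraMap_mem _ _) (hx ▸ IntermediateField.mem_adjoin_simple_self F _)

lemma Qsqrt_eq_adjoin {D : ℤ} {δ : ℂ} (hδ : δ ^ 2 = D) :
    Qsqrt D = IntermediateField.adjoin ℚ {δ} := by
  have hroot : ((D : ℂ) ^ ((1 : ℂ) / 2)) ^ 2 = δ ^ 2 := by
    rw [hδ, one_div]
    exact_mod_cast cpow_nat_inv_pow (D : ℂ) two_ne_zero
  rw [Qsqrt]
  rcases sq_eq_sq_iff_eq_or_eq_neg.1 hroot with h | h <;> rw [h]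
  simpa using adjoin_algebraMap_mul (neg_ne_zero.2 (one_ne_zero (α := ℚ))) δ

lemma Qsqrt_sq_mul {c : ℤ} (hc : c ≠ 0) (D : ℤ) : Qsqrt (c ^ 2 * D) = Qsqrt D := by
  obtain ⟨δ, hδ⟩ := IsAlgClosed.exists_pow_nat_eq (D : ℂ) two_pos
  have hcδ : (c * δ) ^ 2 = ((c ^ 2 * D : ℤ) : ℂ) := by
    rw [mul_pow, hδ]
    push_cast
    rfl
  rw [Qsqrt_eq_adjoin hcδ, Qsqrt_eq_adjoin hδ]
  simpa using adjoin_algebraMap_mul (Int.cast_ne_zero (α := ℚ).2 hc) δ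

lemma isIntegral_of_sq_eq_intCast {D : ℤ} {δ : ℂ} (hδ : δ ^ 2 = D) : IsIntegral ℤ δ :=
  .of_pow two_pos (hδ ▸ isIntegral_intCast D)

lemma exists_rat_of_mem_Qsqrt {D : ℤ} {δ x : ℂ} (hδ : δ ^ 2 = D) (hx : x ∈ Qsqrt D) :
    ∃ u v : ℚ, x = u + v * δ := by
  have hint : IsIntegral ℚ δ := (isIntegral_of_sq_eq_intCast hδ).tower_top
  rw [Qsqrt_eq_adjoin hδ, ← IntermediateField.mem_toSubalgebra,
    IntermediateField.adjoin_simple_toSubalgebra_of_isAlgebraic hint.isAlgebraic] at hx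
  induction hx using Algebra.adjoin_induction with
  | mem x hx => exact ⟨0, 1, by simpa using hx⟩
  | algebraMap r => exact ⟨r, 0, by simp⟩
  | add x y _ _ hx hy =>
    obtain ⟨u, v, rfl⟩ := hx
    obtain ⟨u', v', rfl⟩ := hy
    exact ⟨u + u', v + v', by push_cast; ring⟩
  | mul x y _ _ hx hy =>
    obtain ⟨u, v, rfl⟩ := hx
    obtain ⟨u', v', rfl⟩ := hy
    exact ⟨u * u' + v * v' * D, u * v' + u' * v, by push_cast; rw [← hδ]; ring⟩

lemma re_eq_zero_and_im_sq_of_sq_eq {D : ℤ} (hD : D < 0) {δ : ℂ} (hδ : δ ^ 2 = D) :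
    δ.re = 0 ∧ δ.im ^ 2 = -D := by
  have hre : δ.re * δ.re - δ.im * δ.im = D := by
    rw [← mul_re, ← sq, hδ, intCast_re]
  have him : δ.re * δ.im + δ.im * δ.re = 0 := by
    rw [← mul_im, ← sq, hδ, intCast_im]
  have hD' : (D : ℝ) < 0 := by exact_mod_cast hD
  have him₀ : δ.im ≠ 0 := by
    intro h
    rw [h] at hre
    nlinarith [mul_self_nonneg δ.re]
  have hre₀ : δ.re = 0 := by
    refine (mul_eq_zero.1 (?_ : δ.re * δ.im = 0)).resolve_right him₀
    linarith
  refine ⟨hre₀, ?_⟩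
  rw [hre₀] at hre
  linarith

lemma exists_re_im_of_mem_Qsqrt {D : ℤ} (hD : D < 0) {x : ℂ} (hx : x ∈ Qsqrt D) :
    ∃ u v : ℚ, x.re = u ∧ x.im ^ 2 = -(v ^ 2 * D : ℚ) := by
  obtain ⟨δ, hδ⟩ := IsAlgClosed.exists_pow_nat_eq (D : ℂ) two_pos
  obtain ⟨hre, him⟩ := re_eq_zero_and_im_sq_of_sq_eq hD hδ
  obtain ⟨u, v, rfl⟩ := exists_rat_of_mem_Qsqrt hδ hx
  refine ⟨u, v, by simp [hre], ?_⟩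
  have him' : ((u : ℂ) + v * δ).im = v * δ.im := by simp
  rw [him', mul_pow, him]
  push_cast
  ring

instance numberField_Qsqrt (D : ℤ) : NumberField (Qsqrt D) where
  to_finiteDimensional := by
    obtain ⟨δ, hδ⟩ := IsAlgClosed.exists_pow_nat_eq (D : ℂ) two_pos
    rw [Qsqrt_eq_adjoin hδ]
    exact IntermediateField.adjoin.finiteDimensional (isIntegral_of_sq_eq_intCast hδ).tower_top

lemma isIntegral_algebraMap_ringOfIntegers {K : IntermediateField ℚ ℂ} (x : 𝓞 K) :
    IsIntegral ℤ (algebraMap (𝓞 K) ℂ x) :=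
  x.isIntegral.map (IsScalarTower.toAlgHom ℤ (𝓞 K) ℂ)

lemma exists_ringOfIntegers_sq_eq (D : ℤ) : ∃ δ : 𝓞 (Qsqrt D), δ ^ 2 = D := by
  obtain ⟨δ, hδ⟩ := IsAlgClosed.exists_pow_nat_eq (D : ℂ) two_pos
  have hmem : δ ∈ Qsqrt D := by
    rw [Qsqrt_eq_adjoin hδ]
    exact IntermediateField.mem_adjoin_simple_self ℚ δ
  have hint : IsIntegral ℤ (⟨δ, hmem⟩ : Qsqrt D) :=
    (isIntegral_algebraMap_iff (algebraMap (Qsqrt D) ℂ).injective).1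
      (isIntegral_of_sq_eq_intCast hδ)
  obtain ⟨δ', rfl⟩ : ∃ δ' : 𝓞 (Qsqrt D), algebraMap (𝓞 (Qsqrt D)) ℂ δ' = δ :=
    ⟨⟨_, hint⟩, rfl⟩
  refine ⟨δ', FaithfulSMul.algebraMap_injective (𝓞 (Qsqrt D)) ℂ ?_⟩
  rw [map_pow, map_intCast, hδ]

-- For `x = u + v√D` the discriminant `t² - 4N` is `4v²D`.
lemma exists_trace_norm {D : ℤ} (hD : D < 0) (α : 𝓞 (Qsqrt D)) :
    ∃ t N : ℤ, 2 * (algebraMap _ ℂ α).re = t ∧ normSq (algebraMap _ ℂ α) = N ∧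
      IsSquare ((t ^ 2 - 4 * N) * D) := by
  have hint := isIntegral_algebraMap_ringOfIntegers α
  have hx : algebraMap _ ℂ α ∈ Qsqrt D := (α : Qsqrt D).2
  set x := algebraMap _ ℂ α
  obtain ⟨u, v, hre, him⟩ := exists_re_im_of_mem_Qsqrt hD hx
  have hnormSq : normSq x = (u ^ 2 - v ^ 2 * D : ℚ) := by
    rw [normSq_apply, ← sq, ← sq, hre, him]
    push_cast
    ring
  obtain ⟨t, ht⟩ : ∃ t : ℤ, x + conj x = t := by
    apply (hint.add (isIntegral_conj hint)).exists_int_iff_exists_rat.1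
    exact ⟨2 * u, by rw [add_conj, hre]; push_cast; rfl⟩
  obtain ⟨N, hN⟩ : ∃ N : ℤ, x * conj x = N := by
    apply (hint.mul (isIntegral_conj hint)).exists_int_iff_exists_rat.1
    exact ⟨u ^ 2 - v ^ 2 * D, by rw [mul_conj, hnormSq]; push_cast; rfl⟩
  have ht' : 2 * x.re = t := by rw [add_conj] at ht; exact_mod_cast ht
  have hN' : normSq x = N := by rw [mul_conj] at hN; exact_mod_cast hN
  refine ⟨t, N, ht', hN', Rat.isSquare_intCast_iff.1 ⟨2 * v * D, ?_⟩⟩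
  have hut : 2 * u = t := by rw [hre] at ht'; exact_mod_cast ht'
  have huN : u ^ 2 - v ^ 2 * D = N := by rw [hnormSq] at hN'; exact_mod_cast hN'
  push_cast
  rw [← hut, ← huN]
  ring

lemma units_eq_one_or_eq_neg_one {D : ℤ} (hD : D < 0) (hD4 : D % 4 = 2)
    (u : (𝓞 (Qsqrt D))ˣ) : u = 1 ∨ u = -1 := by
  obtain ⟨t, N, ht, hN, hsquare⟩ := exists_trace_norm hD (u : 𝓞 (Qsqrt D))
  obtain ⟨-, N', -, hN', -⟩ := exists_trace_norm hD (↑u⁻¹ : 𝓞 (Qsqrt D))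
  have hinj := FaithfulSMul.algebraMap_injective (𝓞 (Qsqrt D)) ℂ
  set x := algebraMap (𝓞 (Qsqrt D)) ℂ u
  have hNN' : N * N' = 1 := by
    have := congrArg (fun α => normSq (algebraMap (𝓞 (Qsqrt D)) ℂ α)) u.mul_inv
    simp only [map_mul, map_one, hN'] at this
    rw [hN] at this
    exact_mod_cast this
  obtain rfl : N = 1 :=
    Int.eq_one_of_mul_eq_one_right (by exact_mod_cast hN ▸ normSq_nonneg x) hNN'
  have hnorm : x.re ^ 2 + x.im ^ 2 = 1 := by
    rw [sq, sq, ← normSq_apply, hN, Int.cast_one]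
  have ht4 : 4 ≤ t ^ 2 := by
    by_contra! ht4
    exact not_isSquare_sq_sub_four_mul hD4 ht4 (by simpa using hsquare)
  have hre : 1 ≤ x.re ^ 2 := by
    have : (4 : ℝ) ≤ t ^ 2 := by exact_mod_cast ht4
    rw [← ht] at this
    linarith
  have him : x.im = 0 := by
    rw [← sq_eq_zero_iff]
    linarith [sq_nonneg x.im]
  rcases sq_eq_one_iff.1 (by linarith [sq_nonneg x.im] : x.re ^ 2 = 1) with h | h
  · exact .inl (Units.ext (hinj ((Complex.ext (w := 1) h him).trans (by simp))))
  · exact .inr (Units.ext (hinj ((Complex.ext (w := -1) h (by simp [him])).trans (by simp))))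

lemma not_associated_pow_five_add {D : ℤ} (hD : D < 0) (hD4 : D % 4 = 2) {δ : 𝓞 (Qsqrt D)}
    (hδ : δ ^ 2 = D) {p : ℕ} (hp : Odd p) (hp3 : 3 ≤ p) {M : ℤ} (hM : 25 - D = M ^ p)
    (hM4 : M % 4 = 3) (hpM : (p : ℤ) ^ 3 ≤ M) (β : 𝓞 (Qsqrt D)) :
    ¬ Associated (β ^ p) (5 + δ) := by
  rintro ⟨u, hu⟩
  obtain ⟨γ, hγ⟩ : ∃ γ, γ ^ p = 5 + δ := by
    rcases units_eq_one_or_eq_neg_one hD hD4 u with rfl | rfl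
    · exact ⟨β, by simpa using hu⟩
    · exact ⟨-β, by simpa [hp.neg_pow] using hu⟩
  have hδ' : algebraMap (𝓞 (Qsqrt D)) ℂ δ ^ 2 = D := by
    rw [← map_pow, hδ, map_intCast]
  have hγ' : algebraMap (𝓞 (Qsqrt D)) ℂ γ ^ p = 5 + algebraMap (𝓞 (Qsqrt D)) ℂ δ := by
    rw [← map_pow, hγ, map_add, map_ofNat]
  obtain ⟨hre, him⟩ := re_eq_zero_and_im_sq_of_sq_eq hD hδ'
  obtain ⟨t, N, ht, hN, -⟩ := exists_trace_norm hD γ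
  obtain rfl : N = M := by
    have hnorm : (N : ℝ) ^ p = 25 - D := by
      rw [← hN, ← map_pow, hγ', normSq_apply, add_re, add_im, hre, re_ofNat, im_ofNat]
      linarith
    refine hp.strictMono_pow.injective ?_
    rw [← hM]
    exact_mod_cast hnorm
  refine re_pow_ne_five (isIntegral_algebraMap_ringOfIntegers γ) hp hp3 ht hN hM4 hpM ?_
  rw [hγ', add_re, hre, re_ofNat, add_zero]

lemma dvd_classNumSqrt {n : ℕ} (hnodd : Odd n) {y : ℤ} (hy4 : y % 4 = 3)
    (hy5 : ¬ (5 : ℤ) ∣ y) (hny : (n : ℤ) ^ 3 ≤ y) : n ∣ classNumSqrt (25 - y ^ n) := by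
  obtain rfl | hn : n = 1 ∨ 3 ≤ n := by grind
  · exact one_dvd _
  have hy27 : 27 ≤ y := hny.trans' (by exact_mod_cast Nat.pow_le_pow_left hn 3)
  have hyn : y ≤ y ^ n := le_self_pow₀ (by linarith) (by omega)
  have hyn4 : y ^ n % 4 = 3 := emod_four_pow_eq_three hy4 hnodd
  obtain ⟨δ, hδ⟩ := exists_ringOfIntegers_sq_eq (25 - y ^ n)
  have hmul : (5 + δ) * (5 - δ) = y ^ n := by
    push_cast at hδ
    linear_combination -hδ
  have hcoprime : IsCoprime (5 + δ) (5 - δ) := by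
    refine isCoprime_add_sub ?_
    rw [hmul]
    exact_mod_cast (isCoprime_two_mul_five_pow (Int.odd_iff.2 (by omega)) hy5 n).intCast
  have hne : 5 + δ ≠ 0 := by
    intro h
    rw [h, zero_mul] at hmul
    exact pow_ne_zero n (Int.cast_ne_zero.2 (by omega : y ≠ 0)) hmul.symm
  refine dvd_card_classGroup_of_mul_eq_pow (by omega) hne hcoprime hmul ?_
  rintro p hp ⟨m, rfl⟩
  obtain ⟨hpodd, hmodd⟩ := Nat.odd_mul.1 hnodd
  have hp3 : 3 ≤ p := by
    have := hp.two_le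
    grind
  have hpM : (p : ℤ) ^ 3 ≤ y ^ m := by
    calc (p : ℤ) ^ 3 ≤ ((p * m : ℕ) : ℤ) ^ 3 := by
          exact_mod_cast Nat.pow_le_pow_left (Nat.le_mul_of_pos_right p hmodd.pos) 3
      _ ≤ y := hny
      _ ≤ y ^ m := le_self_pow₀ (by linarith) hmodd.pos.ne'
  exact not_associated_pow_five_add (by omega) (by omega) hδ hpodd hp3
    (by rw [sub_sub_cancel, pow_mul']) (emod_four_pow_eq_three hy4 hmodd) hpM

theorem classNumber_dvd_d_add_hundred_general
    (n : ℕ) (hnodd : Odd n) (y : ℤ) (hy4 : y % 4 = 3) (hy5 : ¬ (5 : ℤ) ∣ y)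
    (hny : (n : ℤ) ^ 3 ≤ y) (d : ℤ) (hd : d = 4 * (-y) ^ n) :
    d + 100 = 4 * (25 - y ^ n) ∧ Qsqrt (d + 100) = Qsqrt (25 - y ^ n) ∧
      n ∣ classNumSqrt (d + 100) := by
  have hd' : d + 100 = 4 * (25 - y ^ n) := by
    rw [hd, hnodd.neg_pow]
    ring
  have hQ : Qsqrt (d + 100) = Qsqrt (25 - y ^ n) := by
    rw [hd']
    exact Qsqrt_sq_mul two_ne_zero (25 - y ^ n)
  have hclass : classNumSqrt (d + 100) = classNumSqrt (25 - y ^ n) :=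
    congrArg (fun K : IntermediateField ℚ ℂ => Nat.card (ClassGroup (𝓞 K))) hQ
  exact ⟨hd', hQ, hclass ▸ dvd_classNumSqrt hnodd hy4 hy5 hny⟩

end QuadraticField

/-- Let `n ≥ 3` be an odd integer and `k ≥ 2` an integer with `5 ∤ (4kⁿ − 1)`, and set
`d = 4(1 − 4kⁿ)ⁿ`. Then `d + 100 = 4(25 − (4kⁿ − 1)ⁿ)`, so
`ℚ(√(d + 100)) = ℚ(√(25 − (4kⁿ − 1)ⁿ))`, and `n` divides the class number of
`ℚ(√(d + 100))`. -/
theorem classNumber_dvd_d_add_hundred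
    (n : ℕ) (hn : 3 ≤ n) (hnodd : Odd n) (k : ℤ) (hk : 2 ≤ k)
    (h5 : ¬ (5 : ℤ) ∣ (4 * k ^ n - 1))
    (d : ℤ) (hd : d = 4 * (1 - 4 * k ^ n) ^ n) :
    d + 100 = 4 * (25 - (4 * k ^ n - 1) ^ n) ∧
      Qsqrt (d + 100) = Qsqrt (25 - (4 * k ^ n - 1) ^ n) ∧
      n ∣ classNumSqrt (d + 100) :=
  classNumber_dvd_d_add_hundred_general n hnodd _ (by omega) h5
    (cube_le_four_mul_pow_sub_one (by grind) hk) d (by rw [hd, neg_sub])
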